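/- (Clebsch integrable case) Let p, q, r ∈ ℝ. Define polynomials in the variables (M₁, M₂, M₃, γ₁, γ₂, γ₃): H₁ = M₁² + M₂² + M₃² − (q+r)γ₁² − (p+r)γ₂² − (p+q)γ₃², and H₂ = pM₁² + qM₂² + rM₃² − qr·γ₁² − pr·γ₂² − pq·γ₃². Then {H₁, H₂} = 0, where {·,·} is the e(3) Poisson bracket. -/

import Mathlib

open MvPolynomial

/-- The Levi-Civita symbol `ε_{ijk}` on three indices, with `ε₁₂₃ = 1`. -/
def levyCivita (i j k : Fin 3) : ℝ :=
  if (i, j, k) = (0, 1, 2) ∨ (i, j, k) = (1, 2, 0) ∨ (i, j, k) = (2, 0, 1) then 1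
  else if (i, j, k) = (0, 2, 1) ∨ (i, j, k) = (2, 1, 0) ∨ (i, j, k) = (1, 0, 2) then -1
  else 0

/-- The variable `Mᵢ` as a polynomial in `(M₁,M₂,M₃,γ₁,γ₂,γ₃)`. -/
noncomputable def Mv (i : Fin 3) : MvPolynomial (Fin 3 ⊕ Fin 3) ℝ := X (Sum.inl i)

/-- The variable `γᵢ` as a polynomial in `(M₁,M₂,M₃,γ₁,γ₂,γ₃)`. -/
noncomputable def Gv (i : Fin 3) : MvPolynomial (Fin 3 ⊕ Fin 3) ℝ := X (Sum.inr i)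

/-- The Poisson bracket of the Lie algebra `e(3)`:
`{F,G} = Σ_{i,j,k} ε_{ijk} (Mₖ ∂F/∂Mᵢ ∂G/∂Mⱼ + γₖ (∂F/∂Mᵢ ∂G/∂γⱼ + ∂F/∂γᵢ ∂G/∂Mⱼ))`. -/
noncomputable def e3Bracket (F G : MvPolynomial (Fin 3 ⊕ Fin 3) ℝ) :
    MvPolynomial (Fin 3 ⊕ Fin 3) ℝ :=
  ∑ i : Fin 3, ∑ j : Fin 3, ∑ k : Fin 3,
    C (levyCivita i j k) *
      (Mv k * (pderiv (Sum.inl i) F) * (pderiv (Sum.inl j) G)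
        + Gv k * ((pderiv (Sum.inl i) F) * (pderiv (Sum.inr j) G)
            + (pderiv (Sum.inr i) F) * (pderiv (Sum.inl j) G)))

/-!
Contracting with `ε` turns the bracket into triple products,
`{F, G} = M · (∇_M F × ∇_M G) + γ · (∇_M F × ∇_γ G + ∇_γ F × ∇_M G)`.
For `F = ∑ (aᵢ Mᵢ² + bᵢ γᵢ²)` and `G = ∑ (cᵢ Mᵢ² + dᵢ γᵢ²)` only the monomials `M₁ M₂ M₃` and, for
`(i, j, k)` cyclic, `Mᵢ γⱼ γₖ` can occur, with coefficients `4 det (1, a, c)` and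
`4 (aᵢ (dⱼ - dₖ) - cᵢ (bⱼ - bₖ))`. In the Clebsch case `a = 1`, so the determinant has two equal
rows, while `bᵢ = -(cⱼ + cₖ)` and `dᵢ = -cⱼ cₖ` give `dⱼ - dₖ = cᵢ (cⱼ - cₖ) = cᵢ (bⱼ - bₖ)`.
-/

open scoped Matrix

theorem sum_levyCivita_mul {A : Type*} [CommRing A] (φ : ℝ →+* A) (x u v : Fin 3 → A) :
    ∑ i, ∑ j, ∑ k, φ (levyCivita i j k) * (x k * u i * v j) = x ⬝ᵥ u ⨯₃ v := by
  simp +decide only [levyCivita, Fin.sum_univ_three, cross_apply, dotProduct, if_true, if_false,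
    map_zero, map_one, map_neg, Matrix.cons_val]
  ring

/-- The gradient `∇_M F` with respect to the angular momentum variables `M₁, M₂, M₃`. -/
noncomputable def gradM (F : MvPolynomial (Fin 3 ⊕ Fin 3) ℝ) :
    Fin 3 → MvPolynomial (Fin 3 ⊕ Fin 3) ℝ :=
  fun i ↦ pderiv (Sum.inl i) F

/-- The gradient `∇_γ F` with respect to the Poisson vector variables `γ₁, γ₂, γ₃`. -/
noncomputable def gradG (F : MvPolynomial (Fin 3 ⊕ Fin 3) ℝ) :
    Fin 3 → MvPolynomial (Fin 3 ⊕ Fin 3) ℝ :=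
  fun i ↦ pderiv (Sum.inr i) F

theorem e3Bracket_eq_dotProduct_cross (F G : MvPolynomial (Fin 3 ⊕ Fin 3) ℝ) :
    e3Bracket F G =
      Mv ⬝ᵥ gradM F ⨯₃ gradM G + Gv ⬝ᵥ (gradM F ⨯₃ gradG G + gradG F ⨯₃ gradM G) := by
  simp only [dotProduct_add, ← sum_levyCivita_mul C, ← Finset.sum_add_distrib, e3Bracket, gradM,
    gradG, mul_add, mul_assoc]

/-- The Hamiltonian `∑ᵢ (aᵢ Mᵢ² + bᵢ γᵢ²)`, a quadratic form diagonal in the variables `M`, `γ`. -/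
noncomputable def diagonalQuadratic (a b : Fin 3 → ℝ) : MvPolynomial (Fin 3 ⊕ Fin 3) ℝ :=
  ∑ i, (C (a i) * Mv i ^ 2 + C (b i) * Gv i ^ 2)

theorem gradM_diagonalQuadratic (a b : Fin 3 → ℝ) :
    gradM (diagonalQuadratic a b) = fun i ↦ 2 * C (a i) * Mv i := by
  ext1 i
  simp only [gradM, diagonalQuadratic, Mv, Gv, map_sum, map_add, pderiv_C_mul, pderiv_pow,
    pderiv_X, Pi.single_apply, Sum.inl.injEq, reduceCtorEq, if_false, mul_ite, mul_one, mul_zero,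
    add_zero, Finset.sum_ite_eq', Finset.mem_univ, if_true]
  ring

theorem gradG_diagonalQuadratic (a b : Fin 3 → ℝ) :
    gradG (diagonalQuadratic a b) = fun i ↦ 2 * C (b i) * Gv i := by
  ext1 i
  simp only [gradG, diagonalQuadratic, Mv, Gv, map_sum, map_add, pderiv_C_mul, pderiv_pow,
    pderiv_X, Pi.single_apply, Sum.inr.injEq, reduceCtorEq, if_false, mul_ite, mul_one, mul_zero,
    zero_add, Finset.sum_ite_eq', Finset.mem_univ, if_true]
  ring

-- Addition in `Fin 3` is cyclic, so `(i, i + 1, i + 2)` runs over the even permutations.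
theorem e3Bracket_diagonalQuadratic (a b c d : Fin 3 → ℝ) :
    e3Bracket (diagonalQuadratic a b) (diagonalQuadratic c d) =
      4 * C (1 ⬝ᵥ a ⨯₃ c) * (Mv 0 * Mv 1 * Mv 2) +
        4 * ∑ i, C (a i * (d (i + 1) - d (i + 2)) - c i * (b (i + 1) - b (i + 2))) *
          (Mv i * Gv (i + 1) * Gv (i + 2)) := by
  simp only [e3Bracket_eq_dotProduct_cross, gradM_diagonalQuadratic, gradG_diagonalQuadratic,
    cross_apply, dotProduct, Fin.sum_univ_three, Matrix.cons_val, Pi.add_apply, Pi.one_apply,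
    C_add, C_sub, C_mul, C_1, Fin.reduceAdd]
  ring

theorem e3Bracket_diagonalQuadratic_eq_zero {a b c d : Fin 3 → ℝ} (hM : 1 ⬝ᵥ a ⨯₃ c = 0)
    (hG : ∀ i, a i * (d (i + 1) - d (i + 2)) = c i * (b (i + 1) - b (i + 2))) :
    e3Bracket (diagonalQuadratic a b) (diagonalQuadratic c d) = 0 := by
  simp [e3Bracket_diagonalQuadratic, hM, hG]

/-- The Clebsch Hamiltonian `H₁` with parameters `c = (p, q, r)`, indices being taken cyclically:
`bᵢ = -(cⱼ + cₖ)` for `{i, j, k} = {1, 2, 3}`. -/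
noncomputable def clebschH₁ (c : Fin 3 → ℝ) : MvPolynomial (Fin 3 ⊕ Fin 3) ℝ :=
  diagonalQuadratic 1 fun i ↦ -(c (i + 1) + c (i + 2))

/-- The Clebsch Hamiltonian `H₂`, with the conventions of `clebschH₁`: `dᵢ = -cⱼ cₖ`. -/
noncomputable def clebschH₂ (c : Fin 3 → ℝ) : MvPolynomial (Fin 3 ⊕ Fin 3) ℝ :=
  diagonalQuadratic c fun i ↦ -(c (i + 1) * c (i + 2))

theorem e3Bracket_clebschH₁_clebschH₂ (c : Fin 3 → ℝ) :
    e3Bracket (clebschH₁ c) (clebschH₂ c) = 0 := by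
  refine e3Bracket_diagonalQuadratic_eq_zero (dot_self_cross 1 c) fun i ↦ ?_
  simp only [add_assoc, show (1 + 1 : Fin 3) = 2 from rfl, show (1 + 2 : Fin 3) = 0 from rfl,
    show (2 + 1 : Fin 3) = 0 from rfl, show (2 + 2 : Fin 3) = 1 from rfl, add_zero, Pi.one_apply]
  ring

theorem clebschH₁_vec3 (p q r : ℝ) :
    clebschH₁ ![p, q, r] = Mv 0 ^ 2 + Mv 1 ^ 2 + Mv 2 ^ 2
      - C (q + r) * Gv 0 ^ 2 - C (p + r) * Gv 1 ^ 2 - C (p + q) * Gv 2 ^ 2 := by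
  simp only [clebschH₁, diagonalQuadratic, Fin.sum_univ_three, Fin.reduceAdd, Matrix.cons_val,
    Pi.one_apply, C_neg, C_add, C_1]
  ring

theorem clebschH₂_vec3 (p q r : ℝ) :
    clebschH₂ ![p, q, r] = C p * Mv 0 ^ 2 + C q * Mv 1 ^ 2 + C r * Mv 2 ^ 2
      - C (q * r) * Gv 0 ^ 2 - C (p * r) * Gv 1 ^ 2 - C (p * q) * Gv 2 ^ 2 := by
  simp only [clebschH₂, diagonalQuadratic, Fin.sum_univ_three, Fin.reduceAdd, Matrix.cons_val,
    C_neg, C_mul]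
  ring

/-- Clebsch integrable case: the quadratic Hamiltonians `H₁` and
`H₂` of the Clebsch case commute with respect to the `e(3)` Poisson bracket. -/
theorem stmt15 (p q r : ℝ) :
    e3Bracket
      (Mv 0 ^ 2 + Mv 1 ^ 2 + Mv 2 ^ 2
        - C (q + r) * Gv 0 ^ 2 - C (p + r) * Gv 1 ^ 2 - C (p + q) * Gv 2 ^ 2)
      (C p * Mv 0 ^ 2 + C q * Mv 1 ^ 2 + C r * Mv 2 ^ 2
        - C (q * r) * Gv 0 ^ 2 - C (p * r) * Gv 1 ^ 2 - C (p * q) * Gv 2 ^ 2) = 0 := by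
  rw [← clebschH₁_vec3, ← clebschH₂_vec3]
  exact e3Bracket_clebschH₁_clebschH₂ ![p, q, r]
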